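/- arXiv:1607.08716 — 2 statements merged into one kernel-verified Lean document; each statement's English description precedes it below -/
import Mathlib

section
/- Let d ≥ 2, let Λ₀ = N·ℤ^{d-1} ⊂ ℝ^{d-1} be a Bravais lattice (N an invertible (d-1)×(d-1) real matrix), and let H ⊂ ℝ^{d-1} be a finite set having the same symmetries as Λ₀. Fix t > 0 and α ≥ 1/(2πt²). Let b : {1,…,|H|} → H be a bijection and let s_b : ℤ → H be its |H|-periodic extension (s_b(k) = b(k mod |H|)). Then for every periodic map s : ℤ → H with period P, the average Gaussian energy per point satisfies E^{f_α}(Λ_{s_b}) ≤ E^{f_α}(Λ_s), where for a P-periodic s, E^{f_α}(Λ_s) := (1/P) · Σ_{h=1}^{P} Σ_{k∈ℤ} Σ_{p∈Λ₀} exp(−πα((h−k)²t² + |s(h)−s(k)+p|²)). -/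
open scoped BigOperators

/-!
Since the difference of any two distinct points of `H` sees the same lattice theta value, the
interaction of two layers depends only on their distance and on whether their letters agree: up to
a Gaussian factor it is `B + D * [x = y]`. Here `D ≥ 0`, because a lattice theta function `θ` is
largest at `0`: the parallelogram law and the splitting of pairs of lattice points by parity write
`θ x * θ y` as `∑ c, η c (x + y) * η c (x - y)` over `c ∈ L / 2L`, so AM-GM gives
`2 * θ x ^ 2 ≤ θ (2 * x) * θ 0 + θ 0 ^ 2`, and at a maximum point this forces `θ 0` to be the
maximum.

It remains to minimise `∑ j, g j * ρ j`, where `ρ j` is the frequency with which a letter recurs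
after `j` steps and `g` is the Gaussian of the height. Double partial sums of `ρ` count the pairs of
equal letters in a window, and these are fewest for the cyclic word, whose letter counts are as
balanced as possible. The condition on `α` makes `g` convex on the positive integers, and two
summations by parts carry the comparison over to `∑ j, g j * ρ j`.
-/

open Filter Finset Topology

/-! ### Summation by parts -/

section Convex

variable {w : ℕ → ℝ}

lemma antitone_of_convex_of_summable (hconv : ∀ n, 2 * w (n + 1) ≤ w n + w (n + 2))
    (hw : Summable w) : Antitone w := by
  have hdiff : Antitone fun n => w n - w (n + 1) :=
    antitone_nat_of_succ_le fun n => by linarith [hconv n]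
  have hlim : Tendsto (fun n => w n - w (n + 1)) atTop (𝓝 0) := by
    simpa using hw.tendsto_atTop_zero.sub
      ((tendsto_add_atTop_iff_nat 1).mpr hw.tendsto_atTop_zero)
  exact antitone_nat_of_succ_le fun n => sub_nonneg.mp (hdiff.le_of_tendsto hlim n)

lemma tendsto_mul_atTop_zero_of_antitone_of_summable (hanti : Antitone w) (hw : Summable w) :
    Tendsto (fun n : ℕ => n * w n) atTop (𝓝 0) := by
  have hnonneg (n : ℕ) : 0 ≤ w n := hanti.le_of_tendsto hw.tendsto_atTop_zero n
  have htail : Tendsto (fun n : ℕ => 2 * ∑' i, w (i + n / 2)) atTop (𝓝 0) := by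
    simpa using ((tendsto_sum_nat_add w).comp (Nat.tendsto_div_const_atTop two_ne_zero)).const_mul 2
  refine squeeze_zero (fun n => mul_nonneg n.cast_nonneg (hnonneg n)) (fun n => ?_) htail
  have hhalf : ((n - n / 2 : ℕ) : ℝ) * w n ≤ ∑' i, w (i + n / 2) :=
    calc ((n - n / 2 : ℕ) : ℝ) * w n = ∑ _i ∈ range (n - n / 2), w n := by simp
      _ ≤ ∑ i ∈ range (n - n / 2), w (i + n / 2) :=
        sum_le_sum fun i hi => hanti (by rw [mem_range] at hi; omega)
      _ ≤ ∑' i, w (i + n / 2) :=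
        ((summable_nat_add_iff _).mpr hw).sum_le_tsum _ fun i _ => hnonneg _
  have hn : (n : ℝ) ≤ 2 * ((n - n / 2 : ℕ) : ℝ) := by
    exact_mod_cast (by omega : n ≤ 2 * (n - n / 2))
  nlinarith [mul_le_mul_of_nonneg_right hn (hnonneg n)]

lemma mul_sum_range_le_sum_range_mul_of_antitone {v a : ℕ → ℝ} (hv : Antitone v)
    (ha : ∀ K, 0 ≤ ∑ k ∈ range K, a k) (K : ℕ) :
    v K * ∑ k ∈ range K, a k ≤ ∑ k ∈ range K, v k * a k := by
  induction K with
  | zero => simp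
  | succ K ih =>
    calc v (K + 1) * ∑ k ∈ range (K + 1), a k ≤ v K * ∑ k ∈ range (K + 1), a k :=
          mul_le_mul_of_nonneg_right (hv K.le_succ) (ha _)
      _ = v K * ∑ k ∈ range K, a k + v K * a K := by rw [sum_range_succ, mul_add]
      _ ≤ ∑ k ∈ range (K + 1), v k * a k := by
          rw [sum_range_succ]
          gcongr

lemma mul_sum_range_le_sum_range_mul_of_convex {d : ℕ → ℝ}
    (hconv : ∀ n, 2 * w (n + 1) ≤ w n + w (n + 2)) (hanti : Antitone w)
    (hd : ∀ K, 0 ≤ ∑ k ∈ range K, ∑ i ∈ range k, d i) (K : ℕ) :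
    w K * ∑ i ∈ range K, d i ≤ ∑ i ∈ range K, w i * d i := by
  have hparts : ∑ i ∈ range K, w i * d i
      = w K * ∑ i ∈ range K, d i
        + ∑ k ∈ range K, (w k - w (k + 1)) * ∑ i ∈ range (k + 1), d i := by
    induction K with
    | zero => simp
    | succ K ih =>
      rw [sum_range_succ, ih, sum_range_succ (fun k => (w k - w (k + 1)) * _) K,
        sum_range_succ d K]
      ring
  have hd' (K : ℕ) : 0 ≤ ∑ k ∈ range K, ∑ i ∈ range (k + 1), d i := by
    simpa [sum_range_succ' (fun k => ∑ i ∈ range k, d i)] using hd (K + 1)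
  have hdiff : Antitone fun k => w k - w (k + 1) :=
    antitone_nat_of_succ_le fun k => by linarith [hconv k]
  have hrest := (mul_nonneg (sub_nonneg.mpr (hanti K.le_succ)) (hd' K)).trans
    (mul_sum_range_le_sum_range_mul_of_antitone hdiff hd' K)
  linarith

theorem tsum_mul_nonneg_of_convex {d : ℕ → ℝ} {C : ℝ}
    (hconv : ∀ n, 2 * w (n + 1) ≤ w n + w (n + 2)) (hw : Summable w) (hC : ∀ n, |d n| ≤ C)
    (hd : ∀ K, 0 ≤ ∑ k ∈ range K, ∑ i ∈ range k, d i) :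
    0 ≤ ∑' n, w n * d n := by
  have hanti := antitone_of_convex_of_summable hconv hw
  have hnonneg (n : ℕ) : 0 ≤ w n := hanti.le_of_tendsto hw.tendsto_atTop_zero n
  have hsum : Summable fun n => w n * d n :=
    (hw.mul_right C).of_norm_bounded fun n => by
      rw [norm_mul, Real.norm_of_nonneg (hnonneg n)]
      exact mul_le_mul_of_nonneg_left (hC n) (hnonneg n)
  have hbound (K : ℕ) : -C * (K * w K) ≤ ∑ n ∈ range K, w n * d n :=
    calc -C * (K * w K) = w K * ∑ _n ∈ range K, -C := by simp; ring
      _ ≤ w K * ∑ n ∈ range K, d n := by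
        gcongr with n
        exacts [hnonneg K, neg_le_of_abs_le (hC n)]
      _ ≤ ∑ n ∈ range K, w n * d n := mul_sum_range_le_sum_range_mul_of_convex hconv hanti hd K
  have hlim := (tendsto_mul_atTop_zero_of_antitone_of_summable hanti hw).const_mul (-C)
  rw [mul_zero] at hlim
  exact le_of_tendsto_of_tendsto' hlim hsum.hasSum.tendsto_sum_nat hbound

end Convex

/-! ### Recurrences in periodic words -/

section Words

variable {X : Type*} {s u : ℤ → X} {P n : ℕ}

/-- A word is cyclic of length `n` if each letter occupies exactly one residue class modulo `n`;
equivalently, it is the `n`-periodic extension of a bijective listing of the alphabet. -/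
def IsCyclicWord (n : ℕ) (u : ℤ → X) : Prop :=
  ∀ x, ∃ r : ℤ, ∀ k, u k = x ↔ k ≡ r [ZMOD n]

lemma IsCyclicWord.of_periodic (e : Fin n ≃ X) (hper : Function.Periodic u n)
    (he : ∀ j : Fin n, u (j : ℕ) = e j) : IsCyclicWord n u := by
  intro x
  refine ⟨(e.symm x : ℕ), fun k => ?_⟩
  have hn : (n : ℤ) ≠ 0 := by have := (e.symm x).pos; omega
  obtain ⟨j, hj⟩ : ∃ j : Fin n, ((j : ℕ) : ℤ) = k % n :=
    ⟨⟨(k % n).toNat, by have := Int.emod_lt_of_pos k (by omega : (0 : ℤ) < n); omega⟩,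
      Int.toNat_of_nonneg (Int.emod_nonneg k hn)⟩
  have hk : u k = e j := by
    rw [← he, hj, Int.emod_def, mul_comm, ← smul_eq_mul, hper.sub_zsmul_eq]
  rw [hk, ← Equiv.eq_symm_apply, Int.ModEq, ← hj, Int.emod_eq_of_lt (by omega) (by omega),
    Fin.ext_iff, Nat.cast_inj]

lemma IsCyclicWord.periodic (hu : IsCyclicWord n u) : Function.Periodic u n := fun k => by
  obtain ⟨r, hr⟩ := hu (u k)
  rw [hr, Int.add_modulus_modEq_iff, ← hr]

lemma IsCyclicWord.pos [Finite X] (hu : IsCyclicWord n u) : 0 < n := by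
  refine Nat.pos_of_ne_zero fun hn => not_injective_infinite_finite u fun k l hkl => ?_
  obtain ⟨r, hr⟩ := hu (u l)
  rw [hn] at hr
  exact (Int.modEq_zero_iff.mp ((hr k).mp hkl)).trans (Int.modEq_zero_iff.mp ((hr l).mp rfl)).symm

lemma expect_Icc_add_of_periodic {F : ℤ → ℝ} (hF : Function.Periodic F P) (a : ℤ) :
    𝔼 h ∈ Icc (1 : ℤ) P, F (h + a) = 𝔼 h ∈ Icc (1 : ℤ) P, F h := by
  have hstep : Function.Periodic (fun a => ∑ h ∈ Icc (1 : ℤ) P, F (h + a)) 1 := by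
    intro a
    rw [← sub_eq_zero, ← sum_sub_distrib, Int.Icc_eq_finset_map, sum_map]
    have htelescope := sum_range_sub (fun i : ℕ => F (i + 1 + a)) P
    rw [show (P : ℤ) + 1 + a = (0 : ℕ) + 1 + a + P by push_cast; ring, hF, sub_self] at htelescope
    rw [← htelescope]
    simp [add_comm, add_left_comm]
  simpa [expect_eq_sum_div_card] using
    congrArg (· / (#(Icc (1 : ℤ) P) : ℝ)) (hstep.int_mul_eq a)

variable [DecidableEq X]

/-- The frequency of the positions `h` in the period `{1, …, P}` at which the letter of the word
`s` is repeated after `j` steps. -/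
noncomputable def repeatFreq (s : ℤ → X) (P : ℕ) (j : ℤ) : ℝ :=
  𝔼 h ∈ Icc (1 : ℤ) P, if s h = s (h + j) then 1 else 0

lemma repeatFreq_nonneg (s : ℤ → X) (P : ℕ) (j : ℤ) : 0 ≤ repeatFreq s P j :=
  expect_nonneg fun h _ => by split_ifs <;> norm_num

lemma repeatFreq_le_one (s : ℤ → X) (P : ℕ) (j : ℤ) : repeatFreq s P j ≤ 1 := by
  rcases (Icc (1 : ℤ) P).eq_empty_or_nonempty with hP | hP
  · simp [repeatFreq, hP]
  · exact expect_le hP fun h _ => by split_ifs <;> norm_num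

lemma repeatFreq_zero (s : ℤ → X) (hP : 0 < P) : repeatFreq s P 0 = 1 := by
  have : (Icc (1 : ℤ) P).Nonempty := nonempty_Icc.mpr (by exact_mod_cast hP)
  simp [repeatFreq, expect_const this]

lemma summable_mul_repeatFreq {g : ℤ → ℝ} (hg : Summable g) (s : ℤ → X) (P : ℕ) :
    Summable fun j => g j * repeatFreq s P j :=
  hg.norm.of_norm_bounded fun j => by
    rw [norm_mul, Real.norm_of_nonneg (repeatFreq_nonneg s P j)]
    exact mul_le_of_le_one_right (norm_nonneg _) (repeatFreq_le_one s P j)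

lemma expect_ite_eq_repeatFreq (hs : Function.Periodic s P) (i j : ℤ) :
    𝔼 h ∈ Icc (1 : ℤ) P, (if s (h + i) = s (h + j) then (1 : ℝ) else 0)
      = repeatFreq s P (j - i) := by
  have hper : Function.Periodic (fun h => if s h = s (h + (j - i)) then (1 : ℝ) else 0) P :=
    fun h => by simp only [add_right_comm h (P : ℤ), hs _]
  rw [repeatFreq, ← expect_Icc_add_of_periodic hper i]
  simp only [add_assoc, add_sub_cancel]

lemma repeatFreq_even (hs : Function.Periodic s P) : Function.Even (repeatFreq s P) := fun j => by
  rw [← zero_sub, ← expect_ite_eq_repeatFreq hs]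
  simp only [add_zero, eq_comm, repeatFreq]

/-- The number of ordered pairs of positions in `{0, …, M - 1}` at which `v` has equal letters. -/
def equalPairs (v : ℕ → X) (M : ℕ) : ℝ :=
  ∑ i ∈ range M, ∑ j ∈ range M, if v i = v j then 1 else 0

lemma equalPairs_succ (v : ℕ → X) (M : ℕ) :
    equalPairs v (M + 1)
      = equalPairs v M + 1 + 2 * ∑ i ∈ range M, if v i = v M then 1 else 0 := by
  have hcomm : ∑ j ∈ range M, (if v M = v j then (1 : ℝ) else 0)
      = ∑ i ∈ range M, if v i = v M then 1 else 0 := by simp only [eq_comm]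
  simp only [equalPairs, sum_range_succ, sum_add_distrib, hcomm, if_true]
  ring

lemma equalPairs_eq_sum_count_sq [Fintype X] (v : ℕ → X) (M : ℕ) :
    equalPairs v M = ∑ x, (Nat.count (v · = x) M : ℝ) ^ 2 := by
  have hcount (x : X) : (Nat.count (v · = x) M : ℝ) = ∑ i ∈ range M, if v i = x then 1 else 0 := by
    rw [Nat.count_eq_card_filter_range, sum_boole]
  simp only [hcount, sq, sum_mul_sum]
  rw [sum_comm, equalPairs]
  refine sum_congr rfl fun i _ => ?_
  rw [sum_comm]
  refine sum_congr rfl fun j _ => ?_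
  simp [eq_comm]

lemma sum_count [Fintype X] (v : ℕ → X) (M : ℕ) : ∑ x, Nat.count (v · = x) M = M := by
  simp only [Nat.count_eq_card_filter_range]
  rw [← card_eq_sum_card_fiberwise fun i _ => mem_univ (v i), card_range]

/-- The idea: `(m - q) * (m - q - 1)` is nonnegative at every integer `m` and vanishes at `q` and
`q + 1`. -/
lemma equalPairs_le_of_balanced [Finite X] {u v : ℕ → X} {M q : ℕ}
    (hq : ∀ x, Nat.count (u · = x) M = q ∨ Nat.count (u · = x) M = q + 1) :
    equalPairs u M ≤ equalPairs v M := by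
  have := Fintype.ofFinite X
  have hexcess (v : ℕ → X) :
      ∑ x, ((Nat.count (v · = x) M : ℝ) - q) * (Nat.count (v · = x) M - q - 1)
        = equalPairs v M - (2 * q + 1) * M + Fintype.card X * (q * (q + 1)) := by
    rw [equalPairs_eq_sum_count_sq, ← congrArg (Nat.cast (R := ℝ)) (sum_count v M), Nat.cast_sum,
      mul_sum, ← nsmul_eq_mul, ← card_univ, ← sum_const, ← sum_sub_distrib, ← sum_add_distrib]
    exact sum_congr rfl fun x _ => by ring
  have hu : ∑ x, ((Nat.count (u · = x) M : ℝ) - q) * (Nat.count (u · = x) M - q - 1) = 0 :=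
    sum_eq_zero fun x _ => by rcases hq x with h | h <;> simp [h]
  have hv : 0 ≤ ∑ x, ((Nat.count (v · = x) M : ℝ) - q) * (Nat.count (v · = x) M - q - 1) :=
    sum_nonneg fun x _ => by
      rcases le_or_gt (Nat.count (v · = x) M) q with h | h
      · have : (Nat.count (v · = x) M : ℝ) ≤ q := by exact_mod_cast h
        nlinarith
      · have : (q + 1 : ℝ) ≤ Nat.count (v · = x) M := by exact_mod_cast h
        nlinarith
  rw [hexcess] at hu hv
  linarith

/-- The average of `equalPairs` over the windows of length `M` of the word `s` that start in the
period `{1, …, P}`. -/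
noncomputable def windowPairs (s : ℤ → X) (P M : ℕ) : ℝ :=
  𝔼 h ∈ Icc (1 : ℤ) P, equalPairs (fun i => s (h + i)) M

lemma windowPairs_succ (hP : 0 < P) (hs : Function.Periodic s P) (M : ℕ) :
    windowPairs s P (M + 1)
      = windowPairs s P M + 1 + 2 * ∑ i ∈ range M, repeatFreq s P (i + 1) := by
  have hne : (Icc (1 : ℤ) P).Nonempty := nonempty_Icc.mpr (by exact_mod_cast hP)
  simp only [windowPairs, equalPairs_succ, expect_add_distrib, expect_const hne, ← mul_expect,
    expect_sum_comm, expect_ite_eq_repeatFreq hs]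
  rw [← sum_range_reflect fun i : ℕ => repeatFreq s P (i + 1)]
  congr 2
  refine sum_congr rfl fun i hi => ?_
  rw [mem_range] at hi
  congr 1
  omega

lemma windowPairs_eq (hP : 0 < P) (hs : Function.Periodic s P) (M : ℕ) :
    windowPairs s P M
      = M + 2 * ∑ k ∈ range M, ∑ i ∈ range k, repeatFreq s P (i + 1) := by
  induction M with
  | zero => simp [windowPairs, equalPairs]
  | succ M ih =>
    rw [windowPairs_succ hP hs, ih, sum_range_succ]
    push_cast
    ring

lemma IsCyclicWord.count_eq_or (hn : 0 < n) (hu : IsCyclicWord n u) (h : ℤ) (M : ℕ) (x : X) :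
    Nat.count (fun i : ℕ => u (h + i) = x) M = M / n
      ∨ Nat.count (fun i : ℕ => u (h + i) = x) M = M / n + 1 := by
  obtain ⟨r, hr⟩ := hu x
  obtain ⟨v, -, hv⟩ := Int.existsUnique_equiv_nat (r - h) (by omega : (0 : ℤ) < n)
  replace hv : h + v ≡ r [ZMOD n] := by simpa using hv.add_left h
  have hmod (i : ℕ) : u (h + i) = x ↔ i ≡ v [MOD n] := by
    rw [hr, ← Int.natCast_modEq_iff]
    exact ⟨fun hi => (hi.trans hv.symm).add_left_cancel' h, fun hi => (hi.add_left h).trans hv⟩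
  simp only [hmod, Nat.count_modEq_card M hn]
  split_ifs <;> simp

lemma IsCyclicWord.windowPairs_le [Finite X] (hu : IsCyclicWord n u) (hP : 0 < P) (s : ℤ → X)
    (M : ℕ) : windowPairs u n M ≤ windowPairs s P M := by
  have hle (k l : ℤ) :
      equalPairs (fun i => u (k + i)) M ≤ equalPairs (fun i => s (l + i)) M :=
    equalPairs_le_of_balanced (hu.count_eq_or hu.pos k M)
  have hPne : (Icc (1 : ℤ) P).Nonempty := nonempty_Icc.mpr (by exact_mod_cast hP)
  have hnne : (Icc (1 : ℤ) n).Nonempty := nonempty_Icc.mpr (by exact_mod_cast hu.pos)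
  exact le_expect hPne fun l _ => expect_le hnne fun k _ => hle k l

theorem IsCyclicWord.sum_sum_repeatFreq_le [Finite X] (hu : IsCyclicWord n u)
    (hP : 0 < P) (hs : Function.Periodic s P) (K : ℕ) :
    ∑ k ∈ range K, ∑ i ∈ range k, repeatFreq u n (i + 1)
      ≤ ∑ k ∈ range K, ∑ i ∈ range k, repeatFreq s P (i + 1) := by
  have h := hu.windowPairs_le hP s K
  rw [windowPairs_eq hu.pos hu.periodic, windowPairs_eq hP hs] at h
  linarith

theorem IsCyclicWord.tsum_mul_repeatFreq_le [Finite X] {g : ℤ → ℝ} (hg : Function.Even g)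
    (hsum : Summable g) (hconv : ∀ i : ℕ, 2 * g (i + 2) ≤ g (i + 1) + g (i + 3))
    (hu : IsCyclicWord n u) (hP : 0 < P) (hs : Function.Periodic s P) :
    ∑' j, g j * repeatFreq u n j ≤ ∑' j, g j * repeatFreq s P j := by
  have hsplit {v : ℤ → X} {N : ℕ} (hv : Function.Periodic v N) (hN : 0 < N) :
      ∑' j, g j * repeatFreq v N j
          = g 0 + 2 * ∑' i : ℕ, g (i + 1) * repeatFreq v N (i + 1)
        ∧ Summable fun i : ℕ => g (i + 1) * repeatFreq v N (i + 1) := by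
    have hsum' := summable_mul_repeatFreq hsum v N
    refine ⟨?_, hsum'.comp_injective fun i j hij => by simpa using hij⟩
    rw [tsum_int_eq_zero_add_two_mul_tsum_pnat (fun j => by rw [hg, repeatFreq_even hv]) hsum',
      tsum_pnat_eq_tsum_succ (f := fun i : ℕ => g i * repeatFreq v N i), repeatFreq_zero v hN]
    simp
  obtain ⟨hu_eq, hu_sum⟩ := hsplit hu.periodic hu.pos
  obtain ⟨hs_eq, hs_sum⟩ := hsplit hs hP
  have hdiff : 0 ≤ ∑' i : ℕ,
      g (i + 1) * (repeatFreq s P (i + 1) - repeatFreq u n (i + 1)) := by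
    refine tsum_mul_nonneg_of_convex (C := 1) (w := fun i : ℕ => g (i + 1))
      (fun i => by simpa [add_assoc] using hconv i)
      (hsum.comp_injective fun i j hij => by simpa using hij)
      (fun i => abs_sub_le_of_nonneg_of_le (repeatFreq_nonneg ..) (repeatFreq_le_one ..)
        (repeatFreq_nonneg ..) (repeatFreq_le_one ..)) fun K => ?_
    simp only [sum_sub_distrib, sub_nonneg]
    exact hu.sum_sum_repeatFreq_le hP hs K
  simp only [mul_sub, hs_sum.tsum_sub hu_sum] at hdiff
  linarith

end Words

/-! ### Lattice theta functions -/

section LatticeTheta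

lemma hasSum_mul_prod_of_nonneg {ι κ : Type*} {f : ι → ℝ} {g : κ → ℝ} {A B : ℝ}
    (hf : HasSum f A) (hg : HasSum g B) (hf₀ : 0 ≤ f) (hg₀ : 0 ≤ g) :
    HasSum (fun w : ι × κ => f w.1 * g w.2) (A * B) :=
  hf.mul hg (hf.summable.mul_of_nonneg hg.summable hf₀ hg₀)

/-- The quotient `A / 2A`, whose elements are the parity classes of the elements of `A`. -/
abbrev ParityClass (A : Type*) [AddCommGroup A] : Type _ :=
  A ⧸ (nsmulAddMonoidHom (α := A) 2).range

/-- The map sends `(c, u, v)` to the pair `(p, q)` with `p + q = c.out + 2u` and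
`p - q = c.out + 2v`. -/
lemma bijective_parity (A : Type*) [AddCommGroup A] [IsAddTorsionFree A] : Function.Bijective
    fun w : ParityClass A × A × A => (w.1.out + w.2.1 + w.2.2, w.2.1 - w.2.2) := by
  constructor
  · rintro ⟨c, u, v⟩ ⟨c', u', v'⟩ h
    obtain ⟨hp, hq⟩ := Prod.mk.inj h
    have hadd : c.out + 2 • u = c'.out + 2 • u' :=
      calc c.out + 2 • u = (c.out + u + v) + (u - v) := by abel
        _ = (c'.out + u' + v') + (u' - v') := by rw [hp, hq]
        _ = c'.out + 2 • u' := by abel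
    obtain rfl : c = c' := by
      rw [← c.out_eq', ← c'.out_eq', QuotientAddGroup.eq]
      refine ⟨u - u', ?_⟩
      rw [nsmulAddMonoidHom_apply, smul_sub, sub_eq_iff_eq_add, add_assoc, ← hadd,
        neg_add_cancel_left]
    obtain rfl : u = u' := nsmul_right_injective two_ne_zero (add_left_cancel hadd)
    rw [show v = v' from sub_right_injective hq]
  · rintro ⟨p, q⟩
    obtain ⟨⟨_, u, rfl⟩, hu⟩ :=
      QuotientAddGroup.mk_out_eq_add (nsmulAddMonoidHom (α := A) 2).range (p + q)
    refine ⟨((p + q : A), -u, -u - q), Prod.ext ?_ (by simp)⟩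
    simp only [hu, nsmulAddMonoidHom_apply]
    abel

instance isAddTorsionFree_coe_submodule {E : Type*} [AddCommGroup E] [Module ℝ E]
    (L : Submodule ℤ E) : IsAddTorsionFree L :=
  have : IsAddTorsionFree E := .of_isTorsionFree ℝ E
  inferInstanceAs (IsAddTorsionFree L.toAddSubgroup)

lemma exp_mul_exp_eq_of_parallelogram {E : Type*} [NormedAddCommGroup E]
    [InnerProductSpace ℝ E] (a : ℝ) (x y p q : E) :
    Real.exp (-a * ‖x + p‖ ^ 2) * Real.exp (-a * ‖y + q‖ ^ 2)
      = Real.exp (-(a / 2) * ‖x + y + (p + q)‖ ^ 2)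
        * Real.exp (-(a / 2) * ‖x - y + (p - q)‖ ^ 2) := by
  have h := parallelogram_law_with_norm ℝ (x + p) (y + q)
  rw [← Real.exp_add, ← Real.exp_add, add_add_add_comm, sub_add_sub_comm]
  congr 1
  linear_combination (a / 2) * h

variable {E : Type*} [NormedAddCommGroup E] {L : Submodule ℤ E} {a : ℝ}

/-- The Gaussian sum `∑ exp (-a‖x + p‖²)` over the points `p` of the lattice `L`, as a function of
the shift `x`. -/
noncomputable def latticeTheta (L : Submodule ℤ E) (a : ℝ) (x : E) : ℝ :=
  ∑' p : L, Real.exp (-a * ‖x + p‖ ^ 2)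

lemma latticeTheta_nonneg (L : Submodule ℤ E) (a : ℝ) (x : E) : 0 ≤ latticeTheta L a x :=
  tsum_nonneg fun _ => (Real.exp_pos _).le

lemma latticeTheta_add_of_mem {q : E} (x : E) (hq : q ∈ L) :
    latticeTheta L a (x + q) = latticeTheta L a x := by
  rw [latticeTheta, latticeTheta,
    ← (Equiv.addLeft (⟨q, hq⟩ : L)).tsum_eq fun p : L => Real.exp (-a * ‖x + p‖ ^ 2)]
  simp [add_assoc]

lemma exp_neg_mul_norm_add_sq_le (ha : 0 < a) (x p : E) :
    Real.exp (-a * ‖x + p‖ ^ 2) ≤ Real.exp (a * ‖x‖ ^ 2) * Real.exp (-(a / 2) * ‖p‖ ^ 2) := by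
  have hp : ‖p‖ ≤ ‖x + p‖ + ‖x‖ := by simpa using norm_sub_le (x + p) x
  have hsq : ‖p‖ ^ 2 ≤ 2 * (‖x + p‖ ^ 2 + ‖x‖ ^ 2) :=
    (pow_le_pow_left₀ (norm_nonneg p) hp 2).trans add_sq_le
  rw [← Real.exp_add, Real.exp_le_exp]
  nlinarith

variable [DiscreteTopology L]

section Summable

variable [NormedSpace ℝ E] [FiniteDimensional ℝ E]

lemma summable_exp_neg_mul_norm_sq (ha : 0 < a) :
    Summable fun p : L => Real.exp (-a * ‖p‖ ^ 2) := by
  set m := Module.finrank ℤ L + 1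
  have hdecay {r : ℝ} (hr : 0 < r) :
      Real.exp (-a * r ^ 2) ≤ (m.factorial / a ^ m) * r⁻¹ ^ (2 * m) := by
    have h := Real.pow_div_factorial_le_exp (a * r ^ 2) (by positivity) m
    rw [neg_mul, Real.exp_neg]
    calc (Real.exp (a * r ^ 2))⁻¹ ≤ ((a * r ^ 2) ^ m / m.factorial)⁻¹ := by gcongr
      _ = (m.factorial / a ^ m) * r⁻¹ ^ (2 * m) := by
        rw [inv_div, mul_pow, ← pow_mul, inv_pow]
        field_simp
  refine ((ZLattice.summable_norm_pow_inv L (2 * m) (by omega)).mul_left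
    (m.factorial / a ^ m)).of_norm_bounded_eventually ?_
  filter_upwards [(Set.finite_singleton (0 : L)).compl_mem_cofinite] with p hp
  rw [Real.norm_of_nonneg (Real.exp_pos _).le]
  exact hdecay (norm_pos_iff.mpr hp)

lemma summable_exp_neg_mul_norm_add_sq (ha : 0 < a) (x : E) :
    Summable fun p : L => Real.exp (-a * ‖x + p‖ ^ 2) :=
  ((summable_exp_neg_mul_norm_sq (half_pos ha)).mul_left _).of_nonneg_of_le
    (fun _ => (Real.exp_pos _).le) fun p => exp_neg_mul_norm_add_sq_le ha x p

lemma hasSum_latticeTheta (ha : 0 < a) (x : E) :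
    HasSum (fun p : L => Real.exp (-a * ‖x + p‖ ^ 2)) (latticeTheta L a x) :=
  (summable_exp_neg_mul_norm_add_sq ha x).hasSum

lemma continuous_latticeTheta (ha : 0 < a) : Continuous (latticeTheta L a) := by
  refine continuous_iff_continuousAt.mpr fun x => ?_
  refine ContinuousOn.continuousAt (s := Metric.ball 0 (‖x‖ + 1)) ?_
    (Metric.isOpen_ball.mem_nhds (by simp))
  have hterm (p : L) : Continuous fun y : E => Real.exp (-a * ‖y + p‖ ^ 2) := by fun_prop
  refine continuousOn_tsum (fun p => (hterm p).continuousOn)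
    ((summable_exp_neg_mul_norm_sq (half_pos ha)).mul_left (Real.exp (a * (‖x‖ + 1) ^ 2)))
    fun p y hy => ?_
  rw [Real.norm_of_nonneg (Real.exp_pos _).le]
  refine (exp_neg_mul_norm_add_sq_le ha y p).trans ?_
  have : ‖y‖ ≤ ‖x‖ + 1 := (mem_ball_zero_iff.mp hy).le
  simp only [Submodule.coe_norm]
  gcongr

lemma exists_forall_latticeTheta_le [IsZLattice ℝ L] (ha : 0 < a) :
    ∃ x₀, ∀ x, latticeTheta L a x ≤ latticeTheta L a x₀ := by
  obtain ⟨_, ⟨x₀, rfl⟩, hmax⟩ :=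
    (IsZLattice.isCompact_range_of_periodic L (latticeTheta L a) (continuous_latticeTheta ha)
      fun x _ => latticeTheta_add_of_mem x).exists_isGreatest (Set.range_nonempty _)
  exact ⟨x₀, fun x => hmax (Set.mem_range_self x)⟩

end Summable

variable [InnerProductSpace ℝ E] [FiniteDimensional ℝ E]

/-- The part of the Gaussian lattice sum at exponent `a / 2` contributed by the points
`c.out + 2u` of the parity class `c`. -/
noncomputable def cosetTheta (a : ℝ) (c : ParityClass L) (x : E) : ℝ :=
  ∑' u : L, Real.exp (-(a / 2) * ‖x + (c.out + 2 • u : L)‖ ^ 2)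

lemma hasSum_cosetTheta (ha : 0 < a) (c : ParityClass L) (x : E) :
    HasSum (fun u : L => Real.exp (-(a / 2) * ‖x + (c.out + 2 • u : L)‖ ^ 2))
      (cosetTheta a c x) :=
  ((summable_exp_neg_mul_norm_add_sq (half_pos ha) x).comp_injective fun _ _ huv =>
    nsmul_right_injective two_ne_zero (add_left_cancel huv)).hasSum

lemma hasSum_cosetTheta_mul (ha : 0 < a) (x y : E) :
    HasSum (fun c : ParityClass L => cosetTheta a c (x + y) * cosetTheta a c (x - y))
      (latticeTheta L a x * latticeTheta L a y) := by
  have hpairs := hasSum_mul_prod_of_nonneg (hasSum_latticeTheta (L := L) ha x)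
    (hasSum_latticeTheta (L := L) ha y) (fun _ => (Real.exp_pos _).le) fun _ => (Real.exp_pos _).le
  refine ((Equiv.ofBijective _ (bijective_parity L)).hasSum_iff.mpr hpairs).prod_fiberwise
    fun c => ?_
  have hpoint (u v : L) :
      Real.exp (-a * ‖x + (c.out + u + v : L)‖ ^ 2) * Real.exp (-a * ‖y + (u - v : L)‖ ^ 2)
        = Real.exp (-(a / 2) * ‖x + y + (c.out + 2 • u : L)‖ ^ 2)
          * Real.exp (-(a / 2) * ‖x - y + (c.out + 2 • v : L)‖ ^ 2) := by
    rw [exp_mul_exp_eq_of_parallelogram, ← Submodule.coe_add, ← Submodule.coe_sub,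
      show c.out + u + v + (u - v) = c.out + 2 • u by abel,
      show c.out + u + v - (u - v) = c.out + 2 • v by abel]
  have hfiber := hasSum_mul_prod_of_nonneg (hasSum_cosetTheta ha c (x + y))
    (hasSum_cosetTheta ha c (x - y)) (fun _ => (Real.exp_pos _).le) fun _ => (Real.exp_pos _).le
  simp only [← hpoint] at hfiber
  exact hfiber

lemma two_mul_latticeTheta_sq_le (ha : 0 < a) (x : E) :
    2 * latticeTheta L a x ^ 2
      ≤ latticeTheta L a (x + x) * latticeTheta L a 0 + latticeTheta L a 0 ^ 2 := by
  have hx := hasSum_cosetTheta_mul (L := L) ha x x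
  have h2x := hasSum_cosetTheta_mul (L := L) ha (x + x) 0
  have h0 := hasSum_cosetTheta_mul (L := L) ha (0 : E) 0
  simp only [add_zero, sub_zero, sub_self] at hx h2x h0
  rw [sq, sq]
  refine hasSum_le (fun c => ?_) (hx.mul_left 2) (h2x.add h0)
  nlinarith [sq_nonneg (cosetTheta a c (x + x) - cosetTheta a c 0)]

theorem latticeTheta_le_latticeTheta_zero [IsZLattice ℝ L] (ha : 0 < a) (x : E) :
    latticeTheta L a x ≤ latticeTheta L a 0 := by
  obtain ⟨x₀, hmax⟩ := exists_forall_latticeTheta_le (L := L) ha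
  refine (hmax x).trans ?_
  nlinarith [two_mul_latticeTheta_sq_le (L := L) ha x₀, hmax (x₀ + x₀), hmax 0,
    latticeTheta_nonneg L a 0]

end LatticeTheta

/-! ### Layered configurations -/

section Gaussian

variable {c : ℝ}

lemma summable_exp_neg_mul_int_sq (hc : 0 < c) :
    Summable fun j : ℤ => Real.exp (-c * (j : ℝ) ^ 2) := by
  have hnat : Summable fun n : ℕ => Real.exp (-c * (n : ℝ) ^ 2) := by
    simpa using Real.summable_exp_nat_mul_of_ge (neg_neg_of_pos hc)
      fun n => (by exact_mod_cast Nat.le_self_pow two_ne_zero n : (n : ℝ) ≤ (n : ℝ) ^ 2)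
  exact .of_nat_of_neg (by simpa using hnat) (by simpa using hnat)

lemma two_mul_exp_neg_mul_sq_le (hc : Real.log 2 ≤ 3 * c) (i : ℕ) :
    2 * Real.exp (-c * (i + 2 : ℝ) ^ 2)
      ≤ Real.exp (-c * (i + 1 : ℝ) ^ 2) + Real.exp (-c * (i + 3 : ℝ) ^ 2) := by
  have hc₀ : 0 < c := by linarith [Real.log_pos one_lt_two]
  have htwo : (2 : ℝ) ≤ Real.exp (c * (2 * i + 3)) := by
    rw [← Real.log_le_iff_le_exp two_pos]
    nlinarith [mul_nonneg hc₀.le i.cast_nonneg]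
  calc 2 * Real.exp (-c * (i + 2 : ℝ) ^ 2)
      ≤ Real.exp (c * (2 * i + 3)) * Real.exp (-c * (i + 2 : ℝ) ^ 2) := by gcongr
    _ = Real.exp (-c * (i + 1 : ℝ) ^ 2) := by rw [← Real.exp_add]; congr 1; ring
    _ ≤ _ := le_add_of_nonneg_right (Real.exp_pos _).le

end Gaussian

section Energy

variable {X E : Type*} [NormedAddCommGroup E] {L : Submodule ℤ E}

/-- The configuration `H`, a family of points indexed by letters, has the same symmetries as the
lattice `L`. -/
def HasSameSymmetries (L : Submodule ℤ E) (H : X → E) : Prop :=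
  ∀ ⦃i j k l : X⦄, i ≠ j → k ≠ l →
    ∃ φ : L ≃ L, ∀ p : L, ‖(p : E) + H i - H j‖ = ‖(φ p : E) + H k - H l‖

/-- The average Gaussian energy per point of the layered configuration whose `k`-th layer is the
translate of the lattice `L` by `s k` at height `k * t`; the word of translations `s` is meant to be
`P`-periodic. -/
noncomputable def layeredEnergy (L : Submodule ℤ E) (α t : ℝ) (s : ℤ → E) (P : ℕ) : ℝ :=
  𝔼 h ∈ Icc (1 : ℤ) P, ∑' k : ℤ, ∑' p : L,
    Real.exp (-Real.pi * α * (((h - k : ℤ) : ℝ) ^ 2 * t ^ 2 + ‖s h - s k + p‖ ^ 2))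

lemma HasSameSymmetries.latticeTheta_eq {H : X → E} (hH : HasSameSymmetries L H) (a : ℝ)
    {i j k l : X} (hij : i ≠ j) (hkl : k ≠ l) :
    latticeTheta L a (H i - H j) = latticeTheta L a (H k - H l) := by
  obtain ⟨φ, hφ⟩ := hH hij hkl
  have hnorm (p : L) : ‖H i - H j + p‖ = ‖H k - H l + φ p‖ := by
    rw [add_comm (H i - H j), add_comm (H k - H l), ← add_sub_assoc, ← add_sub_assoc]
    exact hφ p
  simp only [latticeTheta, hnorm]
  exact φ.tsum_eq fun p : L => Real.exp (-a * ‖H k - H l + p‖ ^ 2)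

lemma tsum_exp_layer_eq (L : Submodule ℤ E) (α t : ℝ) (x : E) (j : ℤ) :
    ∑' p : L, Real.exp (-Real.pi * α * ((j : ℝ) ^ 2 * t ^ 2 + ‖x + p‖ ^ 2))
      = Real.exp (-(Real.pi * α * t ^ 2) * (j : ℝ) ^ 2) * latticeTheta L (Real.pi * α) x := by
  rw [latticeTheta, ← tsum_mul_left]
  refine tsum_congr fun p => ?_
  rw [← Real.exp_add]
  congr 1
  ring

variable [DecidableEq X]

lemma summable_mul_ite {ι : Type*} {g : ι → ℝ} (hg : Summable g) (p : ι → Prop)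
    [DecidablePred p] : Summable fun j => g j * if p j then 1 else 0 :=
  hg.norm.of_norm_bounded fun j => by split_ifs <;> simp

lemma expect_tsum_mul_ite_eq {g : ℤ → ℝ} (hg : Summable g) (s : ℤ → X) (P : ℕ) :
    𝔼 h ∈ Icc (1 : ℤ) P, ∑' j, g j * (if s h = s (h + j) then 1 else 0)
      = ∑' j, g j * repeatFreq s P j := by
  rw [expect_eq_sum_div_card, ← Summable.tsum_finsetSum fun h _ => summable_mul_ite hg _,
    ← tsum_div_const]
  refine tsum_congr fun j => ?_
  rw [← mul_sum, mul_div_assoc, repeatFreq, expect_eq_sum_div_card]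

lemma layeredEnergy_eq {α t B D : ℝ} {H : X → E}
    (hBD : ∀ i j, latticeTheta L (Real.pi * α) (H i - H j) = B + D * if i = j then 1 else 0)
    (hα : 0 < Real.pi * α * t ^ 2) (s : ℤ → X) {P : ℕ} (hP : 0 < P) :
    layeredEnergy L α t (fun k => H (s k)) P
      = B * (∑' j : ℤ, Real.exp (-(Real.pi * α * t ^ 2) * (j : ℝ) ^ 2))
        + D * ∑' j : ℤ, Real.exp (-(Real.pi * α * t ^ 2) * (j : ℝ) ^ 2) * repeatFreq s P j := by
  have hg := summable_exp_neg_mul_int_sq hα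
  have hrow (h : ℤ) : ∑' k : ℤ, ∑' p : L,
      Real.exp (-Real.pi * α * (((h - k : ℤ) : ℝ) ^ 2 * t ^ 2 + ‖H (s h) - H (s k) + p‖ ^ 2))
        = B * (∑' j : ℤ, Real.exp (-(Real.pi * α * t ^ 2) * (j : ℝ) ^ 2))
          + D * ∑' j : ℤ, Real.exp (-(Real.pi * α * t ^ 2) * (j : ℝ) ^ 2)
            * (if s h = s (h + j) then 1 else 0) := by
    rw [← tsum_mul_left, ← tsum_mul_left,
      ← (hg.mul_left B).tsum_add ((summable_mul_ite hg _).mul_left D),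
      ← (Equiv.addLeft h).tsum_eq]
    refine tsum_congr fun j => ?_
    rw [tsum_exp_layer_eq, hBD, Equiv.coe_addLeft, sub_add_cancel_left, Int.cast_neg, neg_sq]
    ring
  have hne : (Icc (1 : ℤ) P).Nonempty := nonempty_Icc.mpr (by exact_mod_cast hP)
  simp only [layeredEnergy, hrow, expect_add_distrib, expect_const hne, ← mul_expect,
    expect_tsum_mul_ite_eq hg]

end Energy

section Minimality

variable {X E : Type*} [NormedAddCommGroup E] [InnerProductSpace ℝ E] [FiniteDimensional ℝ E]
  {L : Submodule ℤ E} [DiscreteTopology L] [IsZLattice ℝ L]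

lemma HasSameSymmetries.exists_latticeTheta_eq [DecidableEq X] {H : X → E}
    (hH : HasSameSymmetries L H) {a : ℝ} (ha : 0 < a) :
    ∃ B D, 0 ≤ D ∧ ∀ i j, latticeTheta L a (H i - H j) = B + D * if i = j then 1 else 0 := by
  rcases subsingleton_or_nontrivial X with hX | hX
  · exact ⟨0, latticeTheta L a 0, latticeTheta_nonneg L a 0, fun i j => by
      simp [Subsingleton.elim i j]⟩
  · obtain ⟨k, l, hkl⟩ := exists_pair_ne X
    refine ⟨latticeTheta L a (H k - H l), latticeTheta L a 0 - latticeTheta L a (H k - H l),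
      sub_nonneg.mpr (latticeTheta_le_latticeTheta_zero ha _), fun i j => ?_⟩
    split_ifs with hij
    · simp [hij]
    · simp [hH.latticeTheta_eq a hij hkl]

theorem layered_theta_minimal_bijective_general [Finite X] {H : X → E}
    (hH : HasSameSymmetries L H) {α t : ℝ} (hα : Real.log 2 ≤ 3 * (Real.pi * α * t ^ 2))
    {n : ℕ} {u : ℤ → X} (hu : IsCyclicWord n u)
    {s : ℤ → X} {P : ℕ} (hP : 0 < P) (hs : Function.Periodic s P) :
    layeredEnergy L α t (fun k => H (u k)) n ≤ layeredEnergy L α t (fun k => H (s k)) P := by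
  classical
  have hc : 0 < Real.pi * α * t ^ 2 := by linarith [Real.log_pos one_lt_two]
  have ha : 0 < Real.pi * α := pos_of_mul_pos_left hc (sq_nonneg t)
  obtain ⟨B, D, hD, hBD⟩ := hH.exists_latticeTheta_eq ha
  rw [layeredEnergy_eq hBD hc u hu.pos, layeredEnergy_eq hBD hc s hP]
  gcongr B * _ + D * ?_
  exact hu.tsum_mul_repeatFreq_le (fun j => by simp) (summable_exp_neg_mul_int_sq hc)
    (fun i => by exact_mod_cast two_mul_exp_neg_mul_sq_le hα i) hP hs

end Minimality

/-! ### Lattices in coordinates -/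

section Coordinates

variable {ι : Type*} [Fintype ι] [DecidableEq ι] {N : Matrix ι ι ℝ}

/-- The basis of Euclidean space formed by the columns of an invertible matrix. -/
noncomputable def columnBasis (hN : IsUnit N.det) : Module.Basis ι ℝ (EuclideanSpace ℝ ι) :=
  (EuclideanSpace.basisFun ι ℝ).toBasis.map
    (Matrix.toLinearEquiv (EuclideanSpace.basisFun ι ℝ).toBasis N hN)

/-- The lattice `N ℤ^ι`, as a `ℤ`-submodule of Euclidean space. -/
abbrev columnLattice (hN : IsUnit N.det) : Submodule ℤ (EuclideanSpace ℝ ι) :=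
  Submodule.span ℤ (Set.range (columnBasis hN))

/-- The parametrisation `k ↦ N k` of the lattice `N ℤ^ι`. -/
noncomputable def columnLatticeEquiv (hN : IsUnit N.det) : (ι → ℤ) ≃ columnLattice hN :=
  ((columnBasis hN).restrictScalars ℤ).equivFun.symm.toEquiv

lemma columnBasis_apply (hN : IsUnit N.det) (i : ι) :
    columnBasis hN i = WithLp.toLp 2 (N.col i) := by
  rw [columnBasis, Module.Basis.map_apply, Matrix.toLinearEquiv_apply, Matrix.toLin_self]
  ext j
  simp [Pi.single_apply]

lemma coe_columnLatticeEquiv (hN : IsUnit N.det) (k : ι → ℤ) :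
    (columnLatticeEquiv hN k : EuclideanSpace ℝ ι)
      = WithLp.toLp 2 (N.mulVec fun i => (k i : ℝ)) := by
  ext j
  simp [columnLatticeEquiv, Module.Basis.equivFun_symm_apply, columnBasis_apply, Matrix.mulVec,
    dotProduct, mul_comm]

lemma toLp_mem_columnLattice_iff (hN : IsUnit N.det) {v : ι → ℝ} :
    WithLp.toLp 2 v ∈ columnLattice hN ↔ ∃ k : ι → ℤ, v = N.mulVec fun i => (k i : ℝ) := by
  constructor
  · intro hv
    obtain ⟨k, hk⟩ := (columnLatticeEquiv hN).surjective ⟨_, hv⟩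
    exact ⟨k, WithLp.toLp_injective 2 (by rw [← coe_columnLatticeEquiv hN, hk])⟩
  · rintro ⟨k, rfl⟩
    rw [← coe_columnLatticeEquiv hN]
    exact (columnLatticeEquiv hN k).2

lemma layeredEnergy_columnLattice (hN : IsUnit N.det) (α t : ℝ) (s : ℤ → ι → ℝ) (P : ℕ) :
    layeredEnergy (columnLattice hN) α t (fun k => WithLp.toLp 2 (s k)) P
      = (1 / (P : ℝ)) * ∑ h ∈ Icc (1 : ℤ) (P : ℤ), ∑' k : ℤ, ∑' p : ι → ℤ,
          Real.exp (-Real.pi * α * (((h - k : ℤ) : ℝ) ^ 2 * t ^ 2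
            + ∑ i, (s h i - s k i + N.mulVec (fun j => (p j : ℝ)) i) ^ 2)) := by
  rw [layeredEnergy, expect_eq_sum_div_card, Int.card_Icc, add_sub_cancel_right, Int.toNat_natCast,
    one_div_mul_eq_div]
  simp only [← (columnLatticeEquiv hN).tsum_eq, coe_columnLatticeEquiv,
    EuclideanSpace.real_norm_sq_eq, PiLp.add_apply, PiLp.sub_apply]

lemma hasSameSymmetries_columnLattice (hN : IsUnit N.det) {H : Finset (ι → ℝ)} {L₀ : Set (ι → ℝ)}
    (hL₀ : L₀ = {v | ∃ k : ι → ℤ, v = N.mulVec fun i => (k i : ℝ)})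
    (hsym : ∀ x ∈ H, ∀ y ∈ H, ∀ w ∈ H, ∀ z ∈ H, x ≠ y → w ≠ z →
      ∃ φ : L₀ ≃ L₀, ∀ p : L₀,
        ∑ i, ((p : ι → ℝ) i + x i - y i) ^ 2 = ∑ i, ((φ p : ι → ℝ) i + w i - z i) ^ 2) :
    HasSameSymmetries (columnLattice hN) fun x : H => WithLp.toLp 2 (x : ι → ℝ) := by
  intro x y w z hxy hwz
  obtain ⟨φ, hφ⟩ := hsym x x.2 y y.2 w w.2 z z.2 (Subtype.coe_ne_coe.mpr hxy)
    (Subtype.coe_ne_coe.mpr hwz)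
  let e : L₀ ≃ columnLattice hN := (WithLp.equiv 2 (ι → ℝ)).symm.subtypeEquiv fun v => by
    rw [hL₀]
    exact (toLp_mem_columnLattice_iff hN).symm
  refine ⟨(e.symm.trans φ).trans e, e.surjective.forall.mpr fun p => ?_⟩
  rw [← sq_eq_sq₀ (norm_nonneg _) (norm_nonneg _), EuclideanSpace.real_norm_sq_eq,
    EuclideanSpace.real_norm_sq_eq]
  simpa [e] using hφ p

end Coordinates

/-- Optimality of the bijective layering `s_b` among all periodic layerings,
for `α ≥ 1/(2πt²)`.  The lattice is `Λ₀ = N·ℤ^{d-1}`, `H ⊂ ℝ^{d-1}` is a finite set with the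
same symmetries as `Λ₀`, and the energy per point of a `P`-periodic layering `s` is
`(1/P) Σ_{h=1}^P Σ_{k∈ℤ} Σ_{p∈Λ₀} exp(−πα((h−k)²t² + |s(h)−s(k)+p|²))`. -/
theorem layered_theta_minimal_bijective
    (d : ℕ) (hd : 2 ≤ d)
    (N : Matrix (Fin (d - 1)) (Fin (d - 1)) ℝ) (hN : IsUnit N.det)
    (H : Finset (Fin (d - 1) → ℝ))
    (L0 : Set (Fin (d - 1) → ℝ))
    (hL0 : L0 = {v | ∃ k : Fin (d - 1) → ℤ, v = N.mulVec (fun i => (k i : ℝ))})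
    -- `H` has the same symmetries as `Λ₀`
    (hsym : ∀ x ∈ H, ∀ y ∈ H, ∀ w ∈ H, ∀ z ∈ H, x ≠ y → w ≠ z →
      ∃ φ : L0 ≃ L0, ∀ p : L0,
        ∑ i, ((p : Fin (d - 1) → ℝ) i + x i - y i) ^ 2
          = ∑ i, ((φ p : Fin (d - 1) → ℝ) i + w i - z i) ^ 2)
    (t α : ℝ) (ht : 0 < t) (hα : 1 / (2 * Real.pi * t ^ 2) ≤ α)
    -- `sb` is the `|H|`-periodic extension of a bijection `b : {1,…,|H|} → H`
    (sb : ℤ → Fin (d - 1) → ℝ)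
    (hsbH : ∀ k, sb k ∈ H)
    (hsb_per : ∀ k, sb (k + (H.card : ℤ)) = sb k)
    (hsb_bij : ∃ e : Fin H.card ≃ {x // x ∈ H},
      ∀ j : Fin H.card, sb ((j : ℕ) : ℤ) = (e j : Fin (d - 1) → ℝ))
    -- `s` is an arbitrary `P`-periodic layering with values in `H`
    (s : ℤ → Fin (d - 1) → ℝ) (hsH : ∀ k, s k ∈ H)
    (P : ℕ) (hP : 0 < P) (hper : ∀ k, s (k + (P : ℤ)) = s k) :
    (1 / (H.card : ℝ)) * ∑ h ∈ Finset.Icc (1 : ℤ) (H.card : ℤ), ∑' k : ℤ,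
        ∑' p : Fin (d - 1) → ℤ,
          Real.exp (-Real.pi * α * (((h - k : ℤ) : ℝ) ^ 2 * t ^ 2
            + ∑ i, (sb h i - sb k i + N.mulVec (fun j => (p j : ℝ)) i) ^ 2))
    ≤ (1 / (P : ℝ)) * ∑ h ∈ Finset.Icc (1 : ℤ) (P : ℤ), ∑' k : ℤ,
        ∑' p : Fin (d - 1) → ℤ,
          Real.exp (-Real.pi * α * (((h - k : ℤ) : ℝ) ^ 2 * t ^ 2
            + ∑ i, (s h i - s k i + N.mulVec (fun j => (p j : ℝ)) i) ^ 2)) := by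
  have hlog : Real.log 2 ≤ 3 * (Real.pi * α * t ^ 2) := by
    rw [div_le_iff₀ (by positivity)] at hα
    linarith [Real.log_two_lt_d9]
  obtain ⟨e, he⟩ := hsb_bij
  have hcyclic : IsCyclicWord #H fun k => (⟨sb k, hsbH k⟩ : H) :=
    .of_periodic e (fun k => Subtype.ext (hsb_per k)) fun j => Subtype.ext (he j)
  have hperiodic : Function.Periodic (fun k => (⟨s k, hsH k⟩ : H)) P :=
    fun k => Subtype.ext (hper k)
  have hmin := layered_theta_minimal_bijective_general
    (hasSameSymmetries_columnLattice hN hL0 hsym) hlog hcyclic hP hperiodic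
  rwa [layeredEnergy_columnLattice hN, layeredEnergy_columnLattice hN] at hmin
end

section
/- Let A₂ ⊂ ℝ² be the triangular lattice generated by (1,0) and (1/2,√3/2), and in ℝ² let a = (0,0), b = (1/2, 1/(2√3)), c = (0, 1/√3). Let s₁ : ℤ → ℝ² be the 3-periodic map with s₁(k) = a, b, c according as k ≡ 0, 1, 2 (mod 3) (giving the FCC-type layering), and let s₂ : ℤ → ℝ² be the 2-periodic map with s₂(k) = a, b according as k ≡ 0, 1 (mod 2) (giving the HCP-type layering). Then for every α > 0, t > 0 and ℓ > 0, the average Gaussian energies per point satisfy the strict inequality (1/3) Σ_{h=1}^{3} Σ_{k∈ℤ} Σ_{p∈A₂} exp(−πα((h−k)²t² + ℓ²|s₁(h)−s₁(k)+p|²)) < (1/2) Σ_{h=1}^{2} Σ_{k∈ℤ} Σ_{p∈A₂} exp(−πα((h−k)²t² + ℓ²|s₂(h)−s₂(k)+p|²)). In particular the FCC lattice has strictly smaller Gaussian energy than the HCP configuration of the same density, for all α > 0. -/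
open scoped BigOperators

/-!
Let `b` be a deep hole of `A₂`. It has order three modulo `A₂`, the FCC shifts are `s₁(k) ≡ k b`,
and the HCP shifts are `0` and `b`. So two layers are either aligned or displaced by `±b` modulo
`A₂`, and they are aligned exactly when their height difference is divisible by `N`, where `N = 3`
for FCC and `N = 2` for HCP. With `Θ(v) = ∑_{p ∈ A₂} exp (-παℓ²|v + p|²)` and
`θ_γ(x) = ∑ₙ exp (-πγ(n + x)²)`, the energy of any point is therefore
`Θ(b) θ_{αt²}(0) + (Θ(0) - Θ(b)) θ_{N²αt²}(0)`. As `θ_γ(0)` decreases strictly in `γ`, it remains to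
see that `Θ(b) < Θ(0)`.

Splitting `A₂` into two rectangular lattices gives, with `β = αℓ²`,
`Θ(u, √3 w) = θ_β(u) θ_{3β}(w) + θ_β(u + 1/2) θ_{3β}(w + 1/2)`. Hence
`2 Θ(u, √3 w) = E_β(u) E_{3β}(w) + O_β(u) O_{3β}(w)`, where `E_γ(x) = θ_γ(x) + θ_γ(x + 1/2)` and
`O_γ(x) = θ_γ(x) - θ_γ(x + 1/2)`. By Poisson summation `θ_γ` is a cosine series with positive
coefficients, of which `E_γ` retains the even and `O_γ` the odd frequencies, so all four factors are
largest in absolute value at the origin, and `E_{3β}` is strictly smaller at the height of `b`.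
-/

section

open Real

/-! ### One-dimensional theta functions -/

/-- The periodized Gaussian `θ_γ(x) = ∑ₙ exp (-πγ(n + x)²)` for `γ > 0`. It is encoded by Mathlib's
even Hurwitz kernel, whose functional equation is Poisson summation. -/
noncomputable def theta (γ x : ℝ) : ℝ := HurwitzZeta.evenKernel x γ

lemma hasSum_theta {γ : ℝ} (hγ : 0 < γ) (x : ℝ) :
    HasSum (fun n : ℤ ↦ exp (-π * γ * (n + x) ^ 2)) (theta γ x) := by
  simpa only [theta, mul_right_comm _ γ] using HurwitzZeta.hasSum_int_evenKernel x hγ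

lemma theta_add_one (γ x : ℝ) : theta γ (x + 1) = theta γ x := by
  simp only [theta, AddCircle.coe_add_period]

lemma theta_pos {γ : ℝ} (hγ : 0 < γ) (x : ℝ) : 0 < theta γ x :=
  hasSum_lt (i := 0) (fun _ ↦ (exp_pos _).le) (exp_pos _) hasSum_zero (hasSum_theta hγ x)

lemma theta_strictAntiOn (x : ℝ) : StrictAntiOn (theta · x) (Set.Ioi 0) := by
  intro γ hγ δ hδ hγδ
  obtain ⟨m, hm⟩ := exists_int_gt (-x)
  have hm_sq : 0 < ((m : ℝ) + x) ^ 2 := pow_pos (by linarith) 2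
  refine hasSum_lt (i := m) (fun n ↦ ?_) ?_ (hasSum_theta hδ x) (hasSum_theta hγ x) <;>
    simp only [neg_mul] <;> gcongr

lemma hasSum_mul_theta {β γ : ℝ} (hβ : 0 < β) (hγ : 0 < γ) (x y : ℝ) :
    HasSum (fun p : ℤ × ℤ ↦ exp (-π * β * (p.1 + x) ^ 2) * exp (-π * γ * (p.2 + y) ^ 2))
      (theta β x * theta γ y) := by
  have hx := hasSum_theta hβ x
  have hy := hasSum_theta hγ y
  exact hx.mul hy (hx.summable.mul_of_nonneg hy.summable
    (fun _ ↦ (exp_pos _).le) (fun _ ↦ (exp_pos _).le))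

lemma exists_hasSum_cos_theta {γ : ℝ} (hγ : 0 < γ) :
    ∃ (c₀ : ℝ) (c : ℕ → ℝ), (∀ n, 0 < c n) ∧
      ∀ x, HasSum (fun n ↦ c n * cos (2 * π * x * (n + 1))) (theta γ x - c₀) := by
  refine ⟨1 / γ ^ (1 / 2 : ℝ), fun n ↦ 1 / γ ^ (1 / 2 : ℝ) * (2 * exp (-π * (n + 1) ^ 2 * (1 / γ))),
    fun n ↦ by positivity, fun x ↦ ?_⟩
  have hcos := (HurwitzZeta.hasSum_nat_cosKernel₀ x (one_div_pos.mpr hγ)).mul_left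
    (1 / γ ^ (1 / 2 : ℝ))
  rw [mul_sub_one, ← HurwitzZeta.evenKernel_functional_equation] at hcos
  exact hcos.congr_fun fun n ↦ by ring

lemma cos_two_pi_mul_add_half_mul_natCast (x : ℝ) (n : ℕ) :
    cos (2 * π * (x + 1 / 2) * n) = (-1) ^ n * cos (2 * π * x * n) := by
  rw [← cos_add_nat_mul_pi]
  ring_nf

-- The coefficient `c 1` belongs to the frequency `2`.
lemma exists_hasSum_cos_theta_add_half {γ ε : ℝ} (hγ : 0 < γ) (hε : |ε| ≤ 1) :
    ∃ (c₀ : ℝ) (c : ℕ → ℝ), (∀ n, 0 ≤ c n) ∧ (-1 < ε → 0 < c 1) ∧ ∀ x,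
      HasSum (fun n ↦ c n * cos (2 * π * x * (n + 1)))
        (theta γ x + ε * theta γ (x + 1 / 2) - c₀) := by
  obtain ⟨c₀, c, hc, hθ⟩ := exists_hasSum_cos_theta hγ
  refine ⟨c₀ + ε * c₀, fun n ↦ c n * (1 + ε * (-1) ^ (n + 1)), fun n ↦ ?_, fun hε' ↦ ?_, fun x ↦ ?_⟩
  · have hsign : |ε * (-1) ^ (n + 1)| ≤ 1 := by rwa [abs_mul, abs_neg_one_pow, mul_one]
    exact mul_nonneg (hc n).le (by linarith [neg_le_of_abs_le hsign])
  · exact mul_pos (hc 1) (by norm_num; linarith)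
  · have hshift (n : ℕ) := cos_two_pi_mul_add_half_mul_natCast x (n + 1)
    push_cast at hshift
    convert (hθ x).add ((hθ (x + 1 / 2)).mul_left ε) using 1
    · ext n
      rw [hshift]
      ring
    · ring

lemma theta_add_mul_theta_add_half_le {γ ε : ℝ} (hγ : 0 < γ) (hε : |ε| ≤ 1) (x : ℝ) :
    theta γ x + ε * theta γ (x + 1 / 2) ≤ theta γ 0 + ε * theta γ (1 / 2) := by
  obtain ⟨c₀, c, hc, -, hθ⟩ := exists_hasSum_cos_theta_add_half hγ hε
  have hle := hasSum_le (fun n ↦ ?_) (hθ x) (hθ 0)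
  · simpa using hle
  · simpa using mul_le_mul_of_nonneg_left (cos_le_one (2 * π * x * (n + 1))) (hc n)

lemma theta_add_mul_theta_add_half_lt {γ ε x : ℝ} (hγ : 0 < γ) (hε : |ε| ≤ 1) (hε' : -1 < ε)
    (hx : ∀ m : ℤ, 2 * x ≠ m) :
    theta γ x + ε * theta γ (x + 1 / 2) < theta γ 0 + ε * theta γ (1 / 2) := by
  obtain ⟨c₀, c, hc, hc₁, hθ⟩ := exists_hasSum_cos_theta_add_half hγ hε
  have hcos : cos (2 * π * x * ((1 : ℕ) + 1)) < 1 := by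
    refine (cos_le_one _).lt_of_ne fun h ↦ ?_
    obtain ⟨m, hm⟩ := (cos_eq_one_iff _).mp h
    refine hx m (mul_right_cancel₀ two_pi_pos.ne' ?_)
    push_cast at hm
    linarith
  have hlt := hasSum_lt (i := 1) (fun n ↦ ?_) ?_ (hθ x) (hθ 0)
  · simpa using hlt
  · simpa using mul_le_mul_of_nonneg_left (cos_le_one (2 * π * x * (n + 1))) (hc n)
  · simpa using mul_lt_mul_of_pos_left hcos (hc₁ hε')

lemma abs_theta_sub_theta_add_half_le {γ : ℝ} (hγ : 0 < γ) (x : ℝ) :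
    |theta γ x - theta γ (x + 1 / 2)| ≤ theta γ 0 - theta γ (1 / 2) := by
  have hbound := theta_add_mul_theta_add_half_le hγ (ε := -1) (by norm_num)
  have hx := hbound x
  have hx' := hbound (x + 1 / 2)
  rw [add_assoc, add_halves, theta_add_one] at hx'
  rw [abs_le]
  constructor <;> linarith

/-! ### The theta function of the triangular lattice -/

/-- The point of the triangular lattice `A₂` with integer coordinates `p` in the basis
`(1, 0)`, `(1/2, √3/2)`. -/
noncomputable def triangularPoint (p : ℤ × ℤ) : ℝ × ℝ := (p.1 + p.2 / 2, p.2 * √3 / 2)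

lemma triangularPoint_add (p q : ℤ × ℤ) :
    triangularPoint (p + q) = triangularPoint p + triangularPoint q := by
  ext <;> simp only [triangularPoint, Prod.fst_add, Prod.snd_add, Int.cast_add] <;> ring

lemma triangularPoint_neg (p : ℤ × ℤ) : triangularPoint (-p) = -triangularPoint p := by
  ext <;> simp only [triangularPoint, Prod.fst_neg, Prod.snd_neg, Int.cast_neg] <;> ring

/-- The Gaussian sum `∑_{p ∈ A₂} exp (-πβ|v + p|²)`: the energy that a triangular layer displaced
by `v` contributes. The Euclidean norm is written out since `ℝ × ℝ` carries the sup norm. -/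
noncomputable def triangularTheta (β : ℝ) (v : ℝ × ℝ) : ℝ :=
  ∑' p, exp (-π * β * ((v + triangularPoint p).1 ^ 2 + (v + triangularPoint p).2 ^ 2))

lemma triangularTheta_add_triangularPoint (β : ℝ) (v : ℝ × ℝ) (q : ℤ × ℤ) :
    triangularTheta β (v + triangularPoint q) = triangularTheta β v := by
  simp only [triangularTheta, add_assoc, ← triangularPoint_add]
  exact (Equiv.addLeft q).tsum_eq
    fun p ↦ exp (-π * β * ((v + triangularPoint p).1 ^ 2 + (v + triangularPoint p).2 ^ 2))

lemma triangularTheta_neg (β : ℝ) (v : ℝ × ℝ) : triangularTheta β (-v) = triangularTheta β v := by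
  rw [triangularTheta, ← (Equiv.neg _).tsum_eq]
  simp only [Equiv.neg_apply, triangularPoint_neg, ← neg_add, Prod.fst_neg, Prod.snd_neg, neg_sq,
    triangularTheta]

/-- The reindexing that separates the rows of `A₂` of even and of odd index. The shear `m ↦ m - j`
reduces the horizontal offset of the rows `2j` and `2j + 1` to `0` and `1/2`, respectively. -/
def evenOddRows : (ℤ × ℤ) ⊕ (ℤ × ℤ) ≃ ℤ × ℤ where
  toFun := Sum.elim (fun p ↦ (p.1 - p.2, 2 * p.2)) (fun p ↦ (p.1 - p.2, 2 * p.2 + 1))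
  invFun q := if 2 ∣ q.2 then .inl (q.1 + q.2 / 2, q.2 / 2) else .inr (q.1 + q.2 / 2, q.2 / 2)
  left_inv := by
    rintro (p | p)
    · simp
    · have h1 : ¬ 2 ∣ 2 * p.2 + 1 := by omega
      have h2 : (2 * p.2 + 1) / 2 = p.2 := by omega
      simp [h1, h2]
  right_inv q := by
    dsimp only
    split_ifs <;> ext <;> simp only [Sum.elim_inl, Sum.elim_inr] <;> omega

lemma triangularTheta_eq_theta_mul_theta {β : ℝ} (hβ : 0 < β) (u w : ℝ) :
    triangularTheta β (u, √3 * w) =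
      theta β u * theta (3 * β) w + theta β (u + 1 / 2) * theta (3 * β) (w + 1 / 2) := by
  have h3 : √3 ^ 2 = 3 := sq_sqrt (by norm_num)
  have h3β : 0 < 3 * β := by positivity
  refine (evenOddRows.hasSum_iff.mp (HasSum.sum ?_ ?_)).tsum_eq
  · refine (hasSum_mul_theta hβ h3β u w).congr_fun fun p ↦ ?_
    simp only [← exp_add, Function.comp_apply, evenOddRows, Equiv.coe_fn_mk, Sum.elim_inl,
      triangularPoint, Prod.mk_add_mk, exp_eq_exp]
    push_cast
    linear_combination (-π * β * (w + p.2) ^ 2) * h3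
  · refine (hasSum_mul_theta hβ h3β (u + 1 / 2) (w + 1 / 2)).congr_fun fun p ↦ ?_
    simp only [← exp_add, Function.comp_apply, evenOddRows, Equiv.coe_fn_mk, Sum.elim_inr,
      triangularPoint, Prod.mk_add_mk, exp_eq_exp]
    push_cast
    linear_combination (-π * β * (w + p.2 + 1 / 2) ^ 2) * h3

lemma triangularTheta_lt_triangularTheta_zero {β w : ℝ} (hβ : 0 < β) (hw : ∀ m : ℤ, 2 * w ≠ m)
    (u : ℝ) : triangularTheta β (u, √3 * w) < triangularTheta β 0 := by
  have h3β : 0 < 3 * β := by positivity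
  have hzero : triangularTheta β 0 =
      theta β 0 * theta (3 * β) 0 + theta β (1 / 2) * theta (3 * β) (1 / 2) := by
    simpa [Prod.mk_zero_zero] using triangularTheta_eq_theta_mul_theta hβ 0 0
  have hu_even : theta β u + theta β (u + 1 / 2) ≤ theta β 0 + theta β (1 / 2) := by
    simpa only [one_mul] using theta_add_mul_theta_add_half_le hβ abs_one.le u
  have hu_odd := abs_theta_sub_theta_add_half_le hβ u
  have hw_even : theta (3 * β) w + theta (3 * β) (w + 1 / 2) <
      theta (3 * β) 0 + theta (3 * β) (1 / 2) := by
    simpa only [one_mul] using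
      theta_add_mul_theta_add_half_lt h3β abs_one.le (neg_one_lt_zero.trans one_pos) hw
  have hw_odd := abs_theta_sub_theta_add_half_le h3β w
  have heven := mul_lt_mul' hu_even hw_even (add_pos (theta_pos h3β w) (theta_pos h3β _)).le
    (add_pos (theta_pos hβ 0) (theta_pos hβ _))
  have hodd := (le_abs_self _).trans ((abs_mul _ _).trans_le
    (mul_le_mul hu_odd hw_odd (abs_nonneg _) ((abs_nonneg _).trans hu_odd)))
  rw [triangularTheta_eq_theta_mul_theta hβ, hzero]
  linarith

/-! ### Layers over a deep hole -/

/-- The shift `b = (1/2, 1/(2√3))`, the centre of a triangle of `A₂`. -/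
noncomputable def deepHole : ℝ × ℝ := (1 / 2, 1 / (2 * √3))

lemma deepHole_eq : deepHole = (1 / 2, √3 * (1 / 6)) := by
  have h3 : √3 ^ 2 = 3 := sq_sqrt (by norm_num)
  ext <;> simp only [deepHole]
  field_simp
  linarith

lemma deepHole_add_eq_triangularPoint : deepHole + (0, 1 / √3) = triangularPoint (0, 1) := by
  have h3 : √3 ^ 2 = 3 := sq_sqrt (by norm_num)
  ext
  · norm_num [deepHole_eq, triangularPoint]
  · simp only [deepHole_eq, triangularPoint, Prod.snd_add, Int.cast_one]
    field_simp
    linarith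

lemma three_mul_zsmul_deepHole (q : ℤ) : (3 * q) • deepHole = triangularPoint (q, q) := by
  ext <;> simp [deepHole_eq, triangularPoint] <;> ring

lemma triangularTheta_deepHole_lt {β : ℝ} (hβ : 0 < β) :
    triangularTheta β deepHole < triangularTheta β 0 := by
  rw [deepHole_eq]
  refine triangularTheta_lt_triangularTheta_zero hβ (fun m hm ↦ ?_) _
  have : 3 * m = 1 := by
    rify
    linarith
  omega

lemma exists_eq_three_mul_add (j : ℤ) : ∃ q, j = 3 * q ∨ j = 1 + 3 * q ∨ j = -1 + 3 * q :=
  ⟨(j + 1) / 3, by omega⟩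

lemma triangularTheta_zsmul_deepHole (β : ℝ) (j : ℤ) :
    triangularTheta β (j • deepHole) =
      if 3 ∣ j then triangularTheta β 0 else triangularTheta β deepHole := by
  obtain ⟨q, rfl | rfl | rfl⟩ := exists_eq_three_mul_add j
  · rw [if_pos (dvd_mul_right 3 q), three_mul_zsmul_deepHole, ← zero_add (triangularPoint _),
      triangularTheta_add_triangularPoint]
  · rw [if_neg (by omega), add_zsmul, three_mul_zsmul_deepHole,
      triangularTheta_add_triangularPoint, one_zsmul]
  · rw [if_neg (by omega), add_zsmul, three_mul_zsmul_deepHole,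
      triangularTheta_add_triangularPoint, neg_one_zsmul, triangularTheta_neg]

/-- The FCC-type layering `s₁`, of period three. -/
noncomputable def fccShift (k : ℤ) : ℝ × ℝ :=
  if k % 3 = 0 then 0 else if k % 3 = 1 then deepHole else (0, 1 / √3)

/-- The HCP-type layering `s₂`, of period two. -/
noncomputable def hcpShift (k : ℤ) : ℝ × ℝ :=
  if k % 2 = 0 then 0 else deepHole

lemma exists_fccShift_eq (k : ℤ) : ∃ p, fccShift k = k • deepHole + triangularPoint p := by
  obtain ⟨q, rfl | rfl | rfl⟩ := exists_eq_three_mul_add k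
  · refine ⟨-(q, q), ?_⟩
    rw [fccShift, if_pos (by omega), triangularPoint_neg, three_mul_zsmul_deepHole, add_neg_cancel]
  · refine ⟨-(q, q), ?_⟩
    rw [fccShift, if_neg (by omega), if_pos (by omega), triangularPoint_neg, add_zsmul,
      three_mul_zsmul_deepHole, one_zsmul, add_neg_cancel_right]
  · refine ⟨(0, 1) + -(q, q), ?_⟩
    rw [fccShift, if_neg (by omega), if_neg (by omega), triangularPoint_add, triangularPoint_neg,
      add_zsmul, three_mul_zsmul_deepHole, neg_one_zsmul, add_add_add_comm, add_neg_cancel,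
      add_zero, eq_neg_add_iff_add_eq, deepHole_add_eq_triangularPoint]

lemma triangularTheta_fccShift_sub (β : ℝ) (h k : ℤ) :
    triangularTheta β (fccShift h - fccShift k) =
      if 3 ∣ h - k then triangularTheta β 0 else triangularTheta β deepHole := by
  obtain ⟨p, hp⟩ := exists_fccShift_eq h
  obtain ⟨q, hq⟩ := exists_fccShift_eq k
  have hsub : fccShift h - fccShift k = (h - k) • deepHole + triangularPoint (p + -q) := by
    rw [hp, hq, triangularPoint_add, triangularPoint_neg, sub_zsmul]
    abel
  rw [hsub, triangularTheta_add_triangularPoint, triangularTheta_zsmul_deepHole]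

lemma triangularTheta_hcpShift_sub (β : ℝ) (h k : ℤ) :
    triangularTheta β (hcpShift h - hcpShift k) =
      if 2 ∣ h - k then triangularTheta β 0 else triangularTheta β deepHole := by
  rcases Int.emod_two_eq_zero_or_one h with hh | hh <;>
    rcases Int.emod_two_eq_zero_or_one k with hk | hk
  · simp [hcpShift, hh, hk, show (2 : ℤ) ∣ h - k by omega]
  · simp [hcpShift, hh, hk, show ¬ (2 : ℤ) ∣ h - k by omega, triangularTheta_neg]
  · simp [hcpShift, hh, hk, show ¬ (2 : ℤ) ∣ h - k by omega]
  · simp [hcpShift, hh, hk, show (2 : ℤ) ∣ h - k by omega]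

/-! ### Summation over the layers -/

/-- The energy, in the configuration with interlayer distance `t`, scaling `ℓ` and shifts `s`, of a
point of the layer `h`. -/
noncomputable def pointEnergy (α t ℓ : ℝ) (s : ℤ → ℝ × ℝ) (h : ℤ) : ℝ :=
  ∑' k : ℤ, ∑' p : ℤ × ℤ, exp (-π * α * (((h - k : ℤ) : ℝ) ^ 2 * t ^ 2 + ℓ ^ 2 *
    ((s h - s k + triangularPoint p).1 ^ 2 + (s h - s k + triangularPoint p).2 ^ 2)))

lemma pointEnergy_eq_tsum (α t ℓ : ℝ) (s : ℤ → ℝ × ℝ) (h : ℤ) :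
    pointEnergy α t ℓ s h = ∑' k : ℤ, exp (-π * (α * t ^ 2) * ((h - k : ℤ) : ℝ) ^ 2) *
      triangularTheta (α * ℓ ^ 2) (s h - s k) := by
  simp only [pointEnergy, triangularTheta, ← tsum_mul_left, ← exp_add]
  congr! 5
  ring

lemma hasSum_theta_multiples {γ : ℝ} (hγ : 0 < γ) {N : ℤ} (hN : N ≠ 0) :
    HasSum (fun j : ℤ ↦ if N ∣ j then exp (-π * γ * (j : ℝ) ^ 2) else 0)
      (theta (N ^ 2 * γ) 0) := by
  have hinj : Function.Injective (N * ·) := mul_right_injective₀ hN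
  refine (hinj.hasSum_iff fun j hj ↦ if_neg fun ⟨i, hi⟩ ↦ hj ⟨i, hi.symm⟩).mp ?_
  refine (hasSum_theta (by positivity : 0 < (N : ℝ) ^ 2 * γ) 0).congr_fun fun j ↦ ?_
  simp only [Function.comp_apply, dvd_mul_right, if_true, add_zero]
  push_cast
  ring_nf

lemma pointEnergy_eq_of_dvd {α t ℓ A B : ℝ} (hα : 0 < α) (ht : t ≠ 0) {s : ℤ → ℝ × ℝ} {N : ℤ}
    (hN : N ≠ 0)
    (hs : ∀ h k, triangularTheta (α * ℓ ^ 2) (s h - s k) = if N ∣ h - k then A else B) (h : ℤ) :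
    pointEnergy α t ℓ s h = B * theta (α * t ^ 2) 0 + (A - B) * theta (N ^ 2 * (α * t ^ 2)) 0 := by
  have hγ : 0 < α * t ^ 2 := by positivity
  rw [pointEnergy_eq_tsum]
  simp only [hs]
  refine ((Equiv.subLeft h).tsum_eq fun j : ℤ ↦
    exp (-π * (α * t ^ 2) * (j : ℝ) ^ 2) * if N ∣ j then A else B).trans (HasSum.tsum_eq ?_)
  have hall : HasSum (fun j : ℤ ↦ exp (-π * (α * t ^ 2) * (j : ℝ) ^ 2)) (theta (α * t ^ 2) 0) := by
    simpa only [add_zero] using hasSum_theta hγ 0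
  refine ((hall.mul_left B).add ((hasSum_theta_multiples hγ hN).mul_left (A - B))).congr_fun
    fun j ↦ ?_
  split_ifs <;> ring

end

/-- The FCC-type layering `s₁` (3-periodic, shifts a,b,c) of the triangular
lattice `A₂` has strictly smaller average Gaussian energy per point than the HCP-type
layering `s₂` (2-periodic, shifts a,b), for all `α, t, ℓ > 0`. Here
`a = (0,0)`, `b = (1/2, 1/(2√3))`, `c = (0, 1/√3)`, and points of `A₂` are
`(m + n/2, n·√3/2)` for `(m,n) ∈ ℤ²`. -/
theorem fcc_lt_hcp
    (α t ℓ : ℝ) (hα : 0 < α) (ht : 0 < t) (hℓ : 0 < ℓ)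
    (s1 s2 : ℤ → ℝ × ℝ)
    (hs1 : ∀ k : ℤ, s1 k =
      if k % 3 = 0 then ((0 : ℝ), (0 : ℝ))
      else if k % 3 = 1 then ((1 / 2 : ℝ), 1 / (2 * Real.sqrt 3))
      else ((0 : ℝ), 1 / Real.sqrt 3))
    (hs2 : ∀ k : ℤ, s2 k =
      if k % 2 = 0 then ((0 : ℝ), (0 : ℝ))
      else ((1 / 2 : ℝ), 1 / (2 * Real.sqrt 3))) :
    (1 / 3 : ℝ) * ∑ h ∈ Finset.Icc (1 : ℤ) 3, ∑' k : ℤ, ∑' p : ℤ × ℤ,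
        Real.exp (-Real.pi * α * (((h - k : ℤ) : ℝ) ^ 2 * t ^ 2
          + ℓ ^ 2 * (((s1 h).1 - (s1 k).1 + ((p.1 : ℝ) + (p.2 : ℝ) / 2)) ^ 2
                   + ((s1 h).2 - (s1 k).2 + (p.2 : ℝ) * Real.sqrt 3 / 2) ^ 2)))
    < (1 / 2 : ℝ) * ∑ h ∈ Finset.Icc (1 : ℤ) 2, ∑' k : ℤ, ∑' p : ℤ × ℤ,
        Real.exp (-Real.pi * α * (((h - k : ℤ) : ℝ) ^ 2 * t ^ 2
          + ℓ ^ 2 * (((s2 h).1 - (s2 k).1 + ((p.1 : ℝ) + (p.2 : ℝ) / 2)) ^ 2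
                   + ((s2 h).2 - (s2 k).2 + (p.2 : ℝ) * Real.sqrt 3 / 2) ^ 2))) := by
  obtain rfl : s1 = fccShift := funext hs1
  obtain rfl : s2 = hcpShift := funext hs2
  have hfcc := pointEnergy_eq_of_dvd hα ht.ne' three_ne_zero
    (triangularTheta_fccShift_sub (α * ℓ ^ 2))
  have hhcp := pointEnergy_eq_of_dvd hα ht.ne' two_ne_zero
    (triangularTheta_hcpShift_sub (α * ℓ ^ 2))
  change 1 / 3 * ∑ h ∈ Finset.Icc 1 3, pointEnergy α t ℓ fccShift h <
    1 / 2 * ∑ h ∈ Finset.Icc 1 2, pointEnergy α t ℓ hcpShift h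
  have hlayers : theta (3 ^ 2 * (α * t ^ 2)) 0 < theta (2 ^ 2 * (α * t ^ 2)) 0 :=
    theta_strictAntiOn 0 (Set.mem_Ioi.mpr (by positivity)) (Set.mem_Ioi.mpr (by positivity))
      (by gcongr; norm_num)
  have hplanar := triangularTheta_deepHole_lt (show 0 < α * ℓ ^ 2 by positivity)
  have hgap := mul_lt_mul_of_pos_left hlayers (sub_pos.mpr hplanar)
  have hcard₃ : (Finset.Icc (1 : ℤ) 3).card = 3 := rfl
  have hcard₂ : (Finset.Icc (1 : ℤ) 2).card = 2 := rfl
  simp only [hfcc, hhcp, Finset.sum_const, hcard₃, hcard₂, nsmul_eq_mul]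
  push_cast
  linear_combination hgap
end
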